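/- Let T : X → X be a continuous map on a separable complete metric space X, and let 𝒜 be an upper Furstenberg family that admits a representation 𝒜 = ⋂_{μ∈M} 𝒜_μ whose index set D is a singleton (i.e., 𝒜 itself is a countable intersection of finitely hereditary upward families and 𝒜 is uniformly left-invariant). Then the set of 𝒜-hypercyclic points for T is either empty or a dense G_δ set. -/

import Mathlib

open Filter Topology
open scoped Classical

/-- Hereditary upward family of subsets of ℕ. -/
def HeredUp (𝒜 : Set (Set ℕ)) : Prop := ∀ A ∈ 𝒜, ∀ B : Set ℕ, A ⊆ B → B ∈ 𝒜

/-- Finitely hereditary upward family: for every member `A` there is a finite set `F`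
such that every `B ⊇ A ∩ F` belongs to the family. -/
def FinHeredUp (ℬ : Set (Set ℕ)) : Prop :=
  ∀ A ∈ ℬ, ∃ F : Finset ℕ, ∀ B : Set ℕ, A ∩ ↑F ⊆ B → B ∈ ℬ

/-- `𝒜` is an upper Furstenberg family with representation
`𝒜 = ⋃ δ ⋂ μ Adm δ μ` (where `M` is countable): a proper Furstenberg family,
each `Adm δ μ` is finitely hereditary upward, and `𝒜` is uniformly left-invariant
(note `A - n = {k | k + n ∈ A}`). -/
structure IsUpperFurstenberg {D M : Type*} (𝒜 : Set (Set ℕ))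
    (Adm : D → M → Set (Set ℕ)) : Prop where
  nonempty : 𝒜.Nonempty
  heredUp : HeredUp 𝒜
  proper : ∅ ∉ 𝒜
  countable : Countable M
  repr : 𝒜 = ⋃ δ : D, ⋂ μ : M, Adm δ μ
  finHered : ∀ δ μ, FinHeredUp (Adm δ μ)
  leftInv : ∀ A ∈ 𝒜, ∃ δ : D, ∀ n : ℕ, {k : ℕ | k + n ∈ A} ∈ ⋂ μ : M, Adm δ μ

/-- A point `x` is `𝒜`-universal for the sequence of maps `T n`. -/
def AUniv {X Y : Type*} [TopologicalSpace X] [TopologicalSpace Y]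
    (𝒜 : Set (Set ℕ)) (T : ℕ → X → Y) (x : X) : Prop :=
  ∀ V : Set Y, IsOpen V → V.Nonempty → {n : ℕ | T n x ∈ V} ∈ 𝒜

/-! Membership in a finitely hereditary upward family is decided by finitely many visits, so it is
an open condition on the starting point; imposing it for all `μ` in a countable set and all sets of
a countable basis gives a `G_δ`. The orbit of a single hypercyclic point is dense because every
open set is visited, and by left-invariance it consists of hypercyclic points. -/

section Families

variable {ℬ : Set (Set ℕ)}

theorem FinHeredUp.heredUp (hℬ : FinHeredUp ℬ) : HeredUp ℬ := by
  intro A hA B hAB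
  obtain ⟨F, hF⟩ := hℬ A hA
  exact hF B (Set.inter_subset_left.trans hAB)

theorem HeredUp.iInter {ι : Sort*} {𝒞 : ι → Set (Set ℕ)} (h𝒞 : ∀ i, HeredUp (𝒞 i)) :
    HeredUp (⋂ i, 𝒞 i) := fun A hA B hAB =>
  Set.mem_iInter.2 fun i => h𝒞 i A (Set.mem_iInter.1 hA i) B hAB

theorem FinHeredUp.isOpen_setOf_indices_mem {X : Type*} [TopologicalSpace X]
    (hℬ : FinHeredUp ℬ) {U : ℕ → Set X} (hU : ∀ n, IsOpen (U n)) :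
    IsOpen {x | {n | x ∈ U n} ∈ ℬ} := by
  rw [isOpen_iff_eventually]
  intro x hx
  obtain ⟨F, hF⟩ := hℬ _ hx
  have stays_in : ∀ᶠ y in 𝓝 x, ∀ n ∈ F, x ∈ U n → y ∈ U n :=
    (eventually_all_finset F).2 fun n _ =>
      eventually_imp_distrib_left.2 fun hxn => (hU n).mem_nhds hxn
  filter_upwards [stays_in] with y hy
  exact hF _ fun n hn => hy n hn.2 hn.1

theorem IsUpperFurstenberg.shift_mem {D M : Type*} {𝒜 : Set (Set ℕ)} {Adm : D → M → Set (Set ℕ)}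
    (h𝒜 : IsUpperFurstenberg 𝒜 Adm) {A : Set ℕ} (hA : A ∈ 𝒜) (m : ℕ) : {k | k + m ∈ A} ∈ 𝒜 := by
  obtain ⟨δ, hδ⟩ := h𝒜.leftInv A hA
  rw [h𝒜.repr]
  exact Set.mem_iUnion_of_mem δ (hδ m)

end Families

section Universality

variable {X Y : Type*} [TopologicalSpace X] [TopologicalSpace Y] {𝒜 : Set (Set ℕ)}
  {T : ℕ → X → Y} {x : X}

theorem HeredUp.aUniv_iff_of_isTopologicalBasis (h𝒜 : HeredUp 𝒜) {b : Set (Set Y)}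
    (hb : TopologicalSpace.IsTopologicalBasis b) :
    AUniv 𝒜 T x ↔ ∀ V ∈ b, V.Nonempty → {n | T n x ∈ V} ∈ 𝒜 := by
  refine ⟨fun hx V hV => hx V (hb.isOpen hV), fun hx V hV ⟨y, hy⟩ => ?_⟩
  obtain ⟨W, hW, hyW, hWV⟩ := hb.exists_subset_of_mem_open hy hV
  exact h𝒜 _ (hx W hW ⟨y, hyW⟩) _ fun n hn => hWV hn

theorem isGδ_setOf_aUniv_iInter [SecondCountableTopology Y] {M : Sort*} [Countable M]
    {ℬ : M → Set (Set ℕ)} (hℬ : ∀ μ, FinHeredUp (ℬ μ)) (hT : ∀ n, Continuous (T n)) :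
    IsGδ {x | AUniv (⋂ μ, ℬ μ) T x} := by
  obtain ⟨b, hb_countable, hb_empty, hb⟩ := TopologicalSpace.exists_countable_basis Y
  have hb_nonempty : ∀ V ∈ b, V.Nonempty := fun V hV =>
    Set.nonempty_iff_ne_empty.2 (ne_of_mem_of_not_mem hV hb_empty)
  have setOf_eq : {x | AUniv (⋂ μ, ℬ μ) T x} = ⋂ V ∈ b, ⋂ μ, {x | {n | T n x ∈ V} ∈ ℬ μ} := by
    ext x
    simp only [Set.mem_iInter]
    refine (HeredUp.iInter fun μ => (hℬ μ).heredUp).aUniv_iff_of_isTopologicalBasis hb |>.trans ?_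
    exact forall₂_congr fun V hV => (forall_prop_of_true (hb_nonempty V hV)).trans Set.mem_iInter
  rw [setOf_eq]
  exact .biInter hb_countable fun V hV => .iInter fun μ =>
    ((hℬ μ).isOpen_setOf_indices_mem fun n => (hb.isOpen hV).preimage (hT n)).isGδ

theorem AUniv.denseRange (hx : AUniv 𝒜 T x) (h𝒜 : ∅ ∉ 𝒜) : DenseRange fun n => T n x :=
  dense_iff_inter_open.2 fun V hV hVne => by
    have visits_nonempty : {n | T n x ∈ V}.Nonempty :=
      Set.nonempty_iff_ne_empty.2 (ne_of_mem_of_not_mem (hx V hV hVne) h𝒜)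
    obtain ⟨n, hn⟩ := visits_nonempty
    exact ⟨T n x, hn, n, rfl⟩

theorem AUniv.iterate_apply {T : X → X} (hx : AUniv 𝒜 (fun n => T^[n]) x) {m : ℕ}
    (h𝒜 : ∀ A ∈ 𝒜, {k | k + m ∈ A} ∈ 𝒜) : AUniv 𝒜 (fun n => T^[n]) (T^[m] x) := by
  intro V hV hVne
  simpa only [Set.mem_ofPred_eq, Function.iterate_add_apply] using h𝒜 _ (hx V hV hVne)

end Universality

theorem AHC_empty_or_denseGdelta_general {X : Type*} [TopologicalSpace X]
    [SecondCountableTopology X] (T : X → X) (hT : Continuous T)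
    {M : Type*} (𝒜 : Set (Set ℕ)) (Adm : M → Set (Set ℕ))
    (hA : IsUpperFurstenberg 𝒜 (fun _ : PUnit => Adm)) :
    {x : X | AUniv 𝒜 (fun n => T^[n]) x} = ∅ ∨
      (IsGδ {x : X | AUniv 𝒜 (fun n => T^[n]) x} ∧
        Dense {x : X | AUniv 𝒜 (fun n => T^[n]) x}) := by
  rcases Set.eq_empty_or_nonempty {x : X | AUniv 𝒜 (fun n => T^[n]) x} with hempty | ⟨x, hx⟩
  · exact .inl hempty
  refine .inr ⟨?_, ?_⟩
  · have := hA.countable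
    have repr : 𝒜 = ⋂ μ, Adm μ := hA.repr.trans (Set.iUnion_const _)
    rw [repr]
    exact isGδ_setOf_aUniv_iInter (hA.finHered PUnit.unit) hT.iterate
  · have orbit_subset : Set.range (fun n => T^[n] x) ⊆ {x | AUniv 𝒜 (fun n => T^[n]) x} :=
      Set.range_subset_iff.2 fun n => hx.iterate_apply fun _ hA' => hA.shift_mem hA' n
    exact (hx.denseRange hA.proper).mono orbit_subset

/-- If the upper Furstenberg family `𝒜` has a representation with a singleton index set `D`
(i.e. `𝒜 = ⋂ μ, Adm μ`), then the set of `𝒜`-hypercyclic points of a continuous map on a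
separable complete metric space is either empty or a dense `G_δ` set. -/
theorem AHC_empty_or_denseGdelta {X : Type*} [MetricSpace X] [CompleteSpace X]
    [TopologicalSpace.SeparableSpace X]
    (T : X → X) (hT : Continuous T)
    {M : Type*} (𝒜 : Set (Set ℕ)) (Adm : M → Set (Set ℕ))
    (hA : IsUpperFurstenberg 𝒜 (fun _ : PUnit => Adm)) :
    {x : X | AUniv 𝒜 (fun n => T^[n]) x} = ∅ ∨
      (IsGδ {x : X | AUniv 𝒜 (fun n => T^[n]) x} ∧
        Dense {x : X | AUniv 𝒜 (fun n => T^[n]) x}) := by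
  have : SecondCountableTopology X := UniformSpace.secondCountable_of_separable X
  exact AHC_empty_or_denseGdelta_general T hT 𝒜 Adm hA
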